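/- (Regularized Greedy in the positive Nashian regime.) In the continuous-time model with unit monopolist utilities, let n ≥ 2 and 0 < p ≤ 1/log n, and let γ(u) = u · (1 + log(1 + 1/n) − log u). Suppose the feasible allocation x satisfies the Regularized Greedy condition: for a.e. s ∈ [0,T], ∑_a x a s = 1 and, for all agents a and b, x a s > 0 implies v a s · γ(U b s)^{1−p} ≥ v b s · γ(U a s)^{1−p}. Then for every feasible allocation x* with U*_a = ∫_0^T v a s · x*_a s ds: ((1/n) ∑_a (U a T)^p)^{1/p} ≥ ((1/n) ∑_a (U*_a)^p)^{1/p} / (log(n+1) + 1). -/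

import Mathlib

/-!
Write `α = log (n + 1) + 1`.  For `n = 2` and `p > 1` the claim is trivial: every `U a T` is at least
`1 / 2`, every `Ustar a` is at most `1`, and `2 ≤ α`.  All other cases have `p ≤ 1`, because
`1 < log 3`.

For `p ≤ 1`, concavity of `y ↦ y ^ p`, with the tangent taken at `γ (U a T)`, gives
`(Ustar a) ^ p ≤ (1 - p) * γ (U a T) ^ p + p * γ (U a T) ^ (p - 1) * Ustar a`.
Since `γ` is increasing on the range `[1 / n, 1 + 1 / n]` of the utilities and `p - 1 ≤ 0`, the weight
`γ (U a T) ^ (p - 1)` can be replaced by `γ (U a s) ^ (p - 1)` inside the integral defining `Ustar a`.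
At almost every time the greedy allocation maximizes the resulting weighted welfare
(`greedy_pointwise`), so that
`∑ a, γ (U a T) ^ (p - 1) * Ustar a ≤ ∑ a, ∫ v a * x a * γ (U a) ^ (p - 1)`.
The integrand on the right, times `p`, is at most the derivative of `ψ (U a s)`, where
`ψ u = α ^ p * u ^ p - (1 - p) * γ u ^ p` (`potential_deriv_ge`).  As `ψ (U a)` is monotone and
`ψ (1 / n) ≥ 0`, the integral is at most `ψ (U a T)` (`integral_le_potential`).  Adding up, the terms
`(1 - p) * γ (U a T) ^ p` cancel and `∑ a, (Ustar a) ^ p ≤ α ^ p * ∑ a, (U a T) ^ p` remains.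
-/

open MeasureTheory Real

/-- The tangent line bound for the concave power `y ↦ y ^ p` at the point `c`. -/
lemma rpow_le_tangent {p y c : ℝ} (hp0 : 0 < p) (hp1 : p ≤ 1) (hy : 0 ≤ y) (hc : 0 < c) :
    y ^ p ≤ (1 - p) * c ^ p + p * (c ^ (p - 1) * y) := by
  have h := rpow_one_add_le_one_add_mul_self (s := y / c - 1) (p := p)
    (by have : 0 ≤ y / c := by positivity
        linarith) hp0.le hp1
  rw [add_sub_cancel, div_rpow hy hc.le, div_le_iff₀ (by positivity)] at h
  refine h.trans (le_of_eq ?_)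
  rw [rpow_sub_one hc.ne']
  field_simp
  ring

section Gamma

variable {N k u w p : ℝ}

lemma factor_bounds (hN : 0 < N) (hk : k = 1 + log (1 + 1 / N)) (hu : 1 / N ≤ u)
    (hu2 : u ≤ 1 + 1 / N) : 1 ≤ k - log u ∧ k - log u ≤ log (N + 1) + 1 := by
  have h0 : 0 < 1 / N := by positivity
  have hupos : 0 < u := h0.trans_le hu
  have h1 : log u ≤ log (1 + 1 / N) := log_le_log hupos hu2
  have h2 : log (1 / N) ≤ log u := log_le_log h0 hu
  have h3 : log (1 + 1 / N) = log (N + 1) + log (1 / N) := by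
    rw [← log_mul (by positivity) (by positivity)]
    congr 1
    field_simp
  constructor <;> linarith

lemma hasDerivAt_gamma (hu : 0 < u) :
    HasDerivAt (fun u : ℝ => u * (k - log u)) (k - log u - 1) u := by
  have h := (hasDerivAt_id u).mul ((hasDerivAt_log hu.ne').const_sub k)
  convert! h using 1
  simp only [id]
  field_simp
  ring

lemma gamma_mono (hN : 0 < N) (hk : k = 1 + log (1 + 1 / N)) (hu : 1 / N ≤ u) (huw : u ≤ w)
    (hw : w ≤ 1 + 1 / N) : u * (k - log u) ≤ w * (k - log w) := by
  have h0 : 0 < 1 / N := by positivity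
  have hm : MonotoneOn (fun u : ℝ => u * (k - log u)) (Set.Icc (1 / N) (1 + 1 / N)) := by
    apply monotoneOn_of_hasDerivWithinAt_nonneg (convex_Icc _ _)
      (f' := fun u => k - log u - 1)
    · exact fun y hy => (hasDerivAt_gamma (h0.trans_le hy.1)).continuousAt.continuousWithinAt
    · intro y hy
      exact (hasDerivAt_gamma (h0.trans_le (interior_subset hy).1)).hasDerivWithinAt
    · intro y hy
      have := (factor_bounds hN hk (interior_subset hy).1 (interior_subset hy).2).1
      linarith
  exact hm ⟨hu, huw.trans hw⟩ ⟨hu.trans huw, hw⟩ huw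

lemma gamma_pos (hN : 0 < N) (hk : k = 1 + log (1 + 1 / N)) (hu : 1 / N ≤ u)
    (hu2 : u ≤ 1 + 1 / N) : 0 < u * (k - log u) := by
  have h0 : 0 < 1 / N := by positivity
  have := (factor_bounds hN hk hu hu2).1
  exact mul_pos (h0.trans_le hu) (by linarith)

/-- The derivative of `ψ u = α ^ p * u ^ p - (1 - p) * γ u ^ p`. -/
lemma hasDerivAt_potential (α : ℝ) (hN : 0 < N) (hk : k = 1 + log (1 + 1 / N)) (hu : 1 / N ≤ u)
    (hu2 : u ≤ 1 + 1 / N) :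
    HasDerivAt (fun u : ℝ => α ^ p * u ^ p - (1 - p) * (u * (k - log u)) ^ p)
      (α ^ p * (p * u ^ (p - 1))
        - (1 - p) * ((k - log u - 1) * p * (u * (k - log u)) ^ (p - 1))) u := by
  have h0 : 0 < 1 / N := by positivity
  have hupos := h0.trans_le hu
  have hg := gamma_pos hN hk hu hu2
  exact ((hasDerivAt_rpow_const (Or.inl hupos.ne')).const_mul _).sub
    (((hasDerivAt_gamma hupos).rpow_const (Or.inl hg.ne')).const_mul _)

/-- With `L = k - log u ∈ [1, α]` one has `γ u = u * L`, and the claim reduces to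
`L ^ (p - 1) * (1 + (1 - p) * (L - 1)) ≤ L ^ p ≤ α ^ p`. -/
lemma potential_deriv_ge (hN : 0 < N) (hk : k = 1 + log (1 + 1 / N)) (hu : 1 / N ≤ u)
    (hu2 : u ≤ 1 + 1 / N) (hp0 : 0 < p) :
    p * (u * (k - log u)) ^ (p - 1) ≤ (log (N + 1) + 1) ^ p * (p * u ^ (p - 1))
        - (1 - p) * ((k - log u - 1) * p * (u * (k - log u)) ^ (p - 1)) := by
  have h0 : 0 < 1 / N := by positivity
  have hupos := h0.trans_le hu
  obtain ⟨h1, h2⟩ := factor_bounds hN hk hu hu2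
  generalize k - log u = L at *
  have hL : 0 < L := by linarith
  rw [mul_rpow hupos.le hL.le]
  have hup : 0 < u ^ (p - 1) := by positivity
  have hLp : 0 < L ^ (p - 1) := by positivity
  have e : L ^ p = L ^ (p - 1) * L := by rw [rpow_sub_one hL.ne']; field_simp
  have h3 : L ^ p ≤ (log (N + 1) + 1) ^ p := rpow_le_rpow hL.le h2 hp0.le
  have h4 : L ^ (p - 1) * (1 + (1 - p) * (L - 1)) ≤ L ^ p := by
    rw [e]
    apply mul_le_mul_of_nonneg_left _ hLp.le
    nlinarith [mul_nonneg hp0.le (sub_nonneg.2 h1)]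
  have h5 := mul_le_mul_of_nonneg_left (h4.trans h3) (mul_pos hp0 hup).le
  linarith

end Gamma

/-- One half of the chain rule for `ψ ∘ V`, where `V` is a primitive of an integrable function `g`.
Only the inequality is needed, so monotonicity of `ψ ∘ V` suffices. -/
lemma integral_le_of_deriv_ge {T c C : ℝ} (hT : 0 < T) {g V f ψ ψ' : ℝ → ℝ}
    (hg : IntervalIntegrable g volume 0 T)
    (hg0 : ∀ᵐ s ∂(volume.restrict (Set.Icc (0 : ℝ) T)), 0 ≤ g s)
    (hV : ∀ t, V t = c + ∫ s in (0 : ℝ)..t, g s)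
    (hVm : MonotoneOn V (Set.Icc 0 T))
    (hVr : ∀ t ∈ Set.Icc 0 T, V t ∈ Set.Icc c C)
    (hf : ContinuousOn f (Set.Icc c C)) (hf0 : ∀ u ∈ Set.Icc c C, 0 ≤ f u)
    (hψ : ∀ u ∈ Set.Icc c C, HasDerivAt ψ (ψ' u) u)
    (hfψ : ∀ u ∈ Set.Icc c C, f u ≤ ψ' u) :
    IntervalIntegrable (fun s => g s * f (V s)) volume 0 T ∧
      ∫ s in (0 : ℝ)..T, g s * f (V s) ≤ ψ (V T) - ψ (V 0) := by
  have hVc : ContinuousOn V (Set.Icc 0 T) := by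
    have h := intervalIntegral.continuousOn_primitive_interval' hg Set.left_mem_uIcc
    rw [Set.uIcc_of_le hT.le] at h
    exact (continuousOn_const.add h).congr fun t _ => hV t
  have hfi : IntervalIntegrable (fun s => g s * f (V s)) volume 0 T := by
    apply hg.mul_continuousOn
    rw [Set.uIcc_of_le hT.le]
    exact hf.comp hVc hVr
  refine ⟨hfi, ?_⟩
  have hψm : MonotoneOn ψ (Set.Icc c C) := by
    apply monotoneOn_of_hasDerivWithinAt_nonneg (convex_Icc _ _) (f' := ψ')
    · exact fun y hy => (hψ y hy).continuousAt.continuousWithinAt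
    · exact fun y hy => (hψ y (interior_subset hy)).hasDerivWithinAt
    · exact fun y hy => (hf0 y (interior_subset hy)).trans (hfψ y (interior_subset hy))
  have hm : MonotoneOn (fun s => ψ (V s)) (Set.Icc 0 T) :=
    fun s hs t ht hst => hψm (hVr s hs) (hVr t ht) (hVm hs ht hst)
  have hm' : MonotoneOn (fun s => ψ (V s)) (Set.uIcc 0 T) := by rwa [Set.uIcc_of_le hT.le]
  have h0T : ψ (V 0) ≤ ψ (V T) := hm ⟨le_rfl, hT.le⟩ ⟨hT.le, le_rfl⟩ hT.le
  have hle : ∫ s in (0 : ℝ)..T, deriv (fun s => ψ (V s)) s ≤ ψ (V T) - ψ (V 0) := by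
    have h := hm'.intervalIntegral_deriv_mem_uIcc
    rw [Set.uIcc_of_le (sub_nonneg.2 h0T)] at h
    exact h.2
  refine le_trans ?_ hle
  apply intervalIntegral.integral_mono_ae_restrict hT.le hfi hm'.intervalIntegrable_deriv
  have hd := hg.ae_hasDerivAt_integral
  rw [Set.uIcc_of_le hT.le] at hd
  filter_upwards [hg0, ae_restrict_of_ae hd, ae_restrict_mem measurableSet_Icc] with s h1 h2 hs
  have hVd : HasDerivAt V (g s) s := by
    have := (h2 hs 0 ⟨le_rfl, hT.le⟩).const_add c
    exact this.congr_of_eventuallyEq (Filter.Eventually.of_forall hV)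
  have hcd := (hψ _ (hVr s hs)).comp s hVd
  have e : deriv (fun s => ψ (V s)) s = ψ' (V s) * g s := hcd.deriv
  rw [e, mul_comm]
  exact mul_le_mul_of_nonneg_right (hfψ _ (hVr s hs)) h1

/-- For an agent gaining utility at rate `g`, the `γ ^ (p - 1)`-weighted gain is controlled by
`ψ (V T)`, because `ψ (1 / N) ≥ 0`. -/
lemma integral_le_potential {T N k p : ℝ} (hT : 0 < T) (hN : 0 < N)
    (hk : k = 1 + log (1 + 1 / N)) (hp0 : 0 < p) {g V : ℝ → ℝ}
    (hg : IntervalIntegrable g volume 0 T)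
    (hg0 : ∀ᵐ s ∂(volume.restrict (Set.Icc (0 : ℝ) T)), 0 ≤ g s)
    (hV : ∀ t, V t = 1 / N + ∫ s in (0 : ℝ)..t, g s)
    (hVm : MonotoneOn V (Set.Icc 0 T))
    (hVr : ∀ t ∈ Set.Icc 0 T, V t ∈ Set.Icc (1 / N) (1 + 1 / N)) :
    IntervalIntegrable (fun s => g s * (V s * (k - log (V s))) ^ (p - 1)) volume 0 T ∧
      p * ∫ s in (0 : ℝ)..T, g s * (V s * (k - log (V s))) ^ (p - 1) ≤
        (log (N + 1) + 1) ^ p * V T ^ p - (1 - p) * (V T * (k - log (V T))) ^ p := by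
  have h0 : 0 < 1 / N := by positivity
  have hα : 0 ≤ log (N + 1) + 1 := by
    have := log_nonneg (show (1 : ℝ) ≤ N + 1 by linarith)
    linarith
  have hc : ContinuousOn (fun u : ℝ => (u * (k - log u)) ^ (p - 1))
      (Set.Icc (1 / N) (1 + 1 / N)) := fun u hu =>
    ((hasDerivAt_gamma (h0.trans_le hu.1)).continuousAt.rpow_const
      (Or.inl (gamma_pos hN hk hu.1 hu.2).ne')).continuousWithinAt
  have hm := integral_le_of_deriv_ge (f := fun u => p * (u * (k - log u)) ^ (p - 1))
    hT hg hg0 hV hVm hVr (continuousOn_const.mul hc)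
    (fun u hu => by have := gamma_pos hN hk hu.1 hu.2; positivity)
    (fun u hu => hasDerivAt_potential (log (N + 1) + 1) hN hk hu.1 hu.2)
    (fun u hu => potential_deriv_ge hN hk hu.1 hu.2 hp0)
  have hi : IntervalIntegrable (fun s => g s * (V s * (k - log (V s))) ^ (p - 1)) volume 0 T := by
    have := hm.1.const_mul p⁻¹
    refine this.congr ?_
    intro s _
    field_simp
  refine ⟨hi, ?_⟩
  rw [← intervalIntegral.integral_const_mul]
  have e : ∀ s, p * (g s * (V s * (k - log (V s))) ^ (p - 1))
      = g s * (p * (V s * (k - log (V s))) ^ (p - 1)) := fun s => by ring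
  simp_rw [e]
  refine hm.2.trans (sub_le_self _ ?_)
  have hV0 : V 0 = 1 / N := by simp [hV]
  have hF : k - log (1 / N) = log (N + 1) + 1 := by
    have h3 : log (1 + 1 / N) = log (N + 1) + log (1 / N) := by
      rw [← log_mul (by positivity) (by positivity)]
      congr 1
      field_simp
    linarith
  simp only [hV0, hF]
  rw [mul_rpow h0.le hα]
  have : 0 ≤ (1 / N) ^ p * (log (N + 1) + 1) ^ p := by positivity
  nlinarith

/-- The greedy allocation `x` maximizes the welfare weighted by `γ ^ (p - 1)`; an arbitrary feasible
`z` with weights `d` dominated by these does no better. -/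
lemma greedy_pointwise {n : ℕ} {p : ℝ} {v x z c d : Fin n → ℝ} (hv : ∀ a, 0 ≤ v a)
    (hx : ∀ a, 0 ≤ x a) (hx1 : ∑ a, x a = 1) (hc : ∀ a, 0 < c a)
    (hgr : ∀ a b, 0 < x a → v a * c b ^ (1 - p) ≥ v b * c a ^ (1 - p))
    (hz : ∀ a, 0 ≤ z a) (hz1 : ∑ a, z a ≤ 1) (hd : ∀ a, d a ≤ c a ^ (p - 1)) :
    ∑ b, d b * (v b * z b) ≤ ∑ a, v a * x a * c a ^ (p - 1) := by
  have hinv : ∀ a, c a ^ (p - 1) = (c a ^ (1 - p))⁻¹ := fun a => by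
    rw [← rpow_neg (hc a).le, neg_sub]
  have hmax : ∀ b, v b * c b ^ (p - 1) ≤ ∑ a, v a * x a * c a ^ (p - 1) := by
    intro b
    calc v b * c b ^ (p - 1) = ∑ a, x a * (v b * c b ^ (p - 1)) := by
          rw [← Finset.sum_mul, hx1, one_mul]
      _ ≤ ∑ a, v a * x a * c a ^ (p - 1) := by
          refine Finset.sum_le_sum fun a _ => ?_
          rcases (hx a).eq_or_lt with h | h
          · simp [← h]
          · have h1 := hgr a b h
            have ha : 0 < c a ^ (1 - p) := rpow_pos_of_pos (hc a) _
            have hb : 0 < c b ^ (1 - p) := rpow_pos_of_pos (hc b) _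
            have h2 : v b * c b ^ (p - 1) ≤ v a * c a ^ (p - 1) := by
              rw [hinv, hinv, ← div_eq_mul_inv, ← div_eq_mul_inv, div_le_div_iff₀ hb ha]
              exact h1
            calc _ ≤ x a * (v a * c a ^ (p - 1)) := mul_le_mul_of_nonneg_left h2 h.le
              _ = _ := by ring
  have hM : 0 ≤ ∑ a, v a * x a * c a ^ (p - 1) := Finset.sum_nonneg fun a _ =>
    mul_nonneg (mul_nonneg (hv a) (hx a)) (rpow_nonneg (hc a).le _)
  calc ∑ b, d b * (v b * z b) ≤ ∑ b, z b * ∑ a, v a * x a * c a ^ (p - 1) := by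
        refine Finset.sum_le_sum fun b _ => ?_
        have h1 := mul_le_mul_of_nonneg_right (hd b) (mul_nonneg (hv b) (hz b))
        have h2 := mul_le_mul_of_nonneg_left (hmax b) (hz b)
        linarith
    _ = (∑ b, z b) * ∑ a, v a * x a * c a ^ (p - 1) := by rw [Finset.sum_mul]
    _ ≤ _ := mul_le_of_le_one_left hM hz1

lemma feasible_le_one {n : ℕ} {y : Fin n → ℝ} (h : (∀ a, 0 ≤ y a) ∧ ∑ a, y a ≤ 1) (a : Fin n) :
    y a ≤ 1 :=
  (Finset.single_le_sum (fun b _ => h.1 b) (Finset.mem_univ a)).trans h.2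

lemma integrable_mul_feasible {T : ℝ} (hT : 0 < T) {v y : ℝ → ℝ} (hv : Measurable v)
    (hy : Measurable y) (hvi : IntegrableOn v (Set.Icc (0 : ℝ) T))
    (hy01 : ∀ᵐ s ∂(volume.restrict (Set.Icc (0 : ℝ) T)), 0 ≤ y s ∧ y s ≤ 1) :
    IntervalIntegrable (fun s => v s * y s) volume 0 T := by
  have h : IntegrableOn (fun s => v s * y s) (Set.Icc (0 : ℝ) T) := by
    refine Integrable.mono hvi (hv.mul hy).aestronglyMeasurable ?_
    filter_upwards [hy01] with s hs
    rw [norm_mul]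
    apply mul_le_of_le_one_right (norm_nonneg _)
    rw [Real.norm_of_nonneg hs.1]
    exact hs.2
  rw [intervalIntegrable_iff_integrableOn_Icc_of_le hT.le]
  exact h

theorem stmt_19
    (n : ℕ) (hn : 2 ≤ n) (T : ℝ) (hT : 0 < T)
    (v : Fin n → ℝ → ℝ)
    (hv_meas : ∀ a, Measurable (v a))
    (hv_nonneg : ∀ a, ∀ᵐ s ∂(volume.restrict (Set.Icc (0:ℝ) T)), 0 ≤ v a s)
    (hv_int : ∀ a, IntegrableOn (v a) (Set.Icc (0:ℝ) T))
    (hv_unit : ∀ a, ∫ s in (0:ℝ)..T, v a s = 1)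
    (p : ℝ) (hp0 : 0 < p) (hp : p ≤ 1 / Real.log n)
    (γ : ℝ → ℝ)
    (hγ : ∀ u : ℝ, γ u = u * (1 + Real.log (1 + 1 / (n : ℝ)) - Real.log u))
    (x : Fin n → ℝ → ℝ)
    (hx_meas : ∀ a, Measurable (x a))
    (hx_feas : ∀ᵐ s ∂(volume.restrict (Set.Icc (0:ℝ) T)),
      (∀ a, 0 ≤ x a s) ∧ ∑ a, x a s ≤ 1)
    (U : Fin n → ℝ → ℝ)
    (hU : ∀ a t, U a t = 1 / (n : ℝ) + ∫ s in (0:ℝ)..t, v a s * x a s)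
    (hgreedy : ∀ᵐ s ∂(volume.restrict (Set.Icc (0:ℝ) T)),
      (∑ a, x a s = 1) ∧
      ∀ a b, 0 < x a s →
        v a s * (γ (U b s)) ^ (1 - p) ≥ v b s * (γ (U a s)) ^ (1 - p))
    (xstar : Fin n → ℝ → ℝ)
    (hxstar_meas : ∀ a, Measurable (xstar a))
    (hxstar_feas : ∀ᵐ s ∂(volume.restrict (Set.Icc (0:ℝ) T)),
      (∀ a, 0 ≤ xstar a s) ∧ ∑ a, xstar a s ≤ 1)
    (Ustar : Fin n → ℝ)
    (hUstar : ∀ a, Ustar a = ∫ s in (0:ℝ)..T, v a s * xstar a s) :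
    ((1 / (n : ℝ)) * ∑ a, (U a T) ^ p) ^ (1 / p) ≥
      ((1 / (n : ℝ)) * ∑ a, (Ustar a) ^ p) ^ (1 / p) /
        (Real.log ((n : ℝ) + 1) + 1) := by
  have hn' : (2 : ℝ) ≤ n := by exact_mod_cast hn
  have hN : (0 : ℝ) < n := by linarith
  have hN0 : 0 < 1 / (n : ℝ) := by positivity
  have hxa : ∀ a, ∀ᵐ s ∂(volume.restrict (Set.Icc (0:ℝ) T)), 0 ≤ x a s ∧ x a s ≤ 1 := fun a => by
    filter_upwards [hx_feas] with s hs using ⟨hs.1 a, feasible_le_one hs a⟩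
  have hza : ∀ a, ∀ᵐ s ∂(volume.restrict (Set.Icc (0:ℝ) T)), 0 ≤ xstar a s ∧ xstar a s ≤ 1 :=
    fun a => by
      filter_upwards [hxstar_feas] with s hs using ⟨hs.1 a, feasible_le_one hs a⟩
  have hvi : ∀ a, IntervalIntegrable (v a) volume 0 T := fun a => by
    rw [intervalIntegrable_iff_integrableOn_Icc_of_le hT.le]
    exact hv_int a
  have hgi := fun a => integrable_mul_feasible hT (hv_meas a) (hx_meas a) (hv_int a) (hxa a)
  have hzi := fun a => integrable_mul_feasible hT (hv_meas a) (hxstar_meas a) (hv_int a) (hza a)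
  have hg0 : ∀ a, ∀ᵐ s ∂(volume.restrict (Set.Icc (0:ℝ) T)), 0 ≤ v a s * x a s := fun a => by
    filter_upwards [hv_nonneg a, hxa a] with s h1 h2 using mul_nonneg h1 h2.1
  have hz0 : ∀ a, ∀ᵐ s ∂(volume.restrict (Set.Icc (0:ℝ) T)), 0 ≤ v a s * xstar a s := fun a => by
    filter_upwards [hv_nonneg a, hza a] with s h1 h2 using mul_nonneg h1 h2.1
  have hUs0 : ∀ a, 0 ≤ Ustar a := fun a => by
    rw [hUstar]
    exact intervalIntegral.integral_nonneg_of_ae_restrict hT.le (hz0 a)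
  have hUs1 : ∀ a, Ustar a ≤ 1 := fun a => by
    rw [hUstar, ← hv_unit a]
    apply intervalIntegral.integral_mono_ae_restrict hT.le (hzi a) (hvi a)
    filter_upwards [hv_nonneg a, hza a] with s h1 h2 using mul_le_of_le_one_right h1 h2.2
  have hUm : ∀ a, MonotoneOn (U a) (Set.Icc 0 T) := fun a s hs t ht hst => by
    rw [hU, hU]
    have hsub : ∀ r ∈ Set.Icc 0 T, IntervalIntegrable (fun s => v a s * x a s) volume 0 r :=
      fun r hr => (hgi a).mono_set (by
        rw [Set.uIcc_of_le hr.1, Set.uIcc_of_le hT.le]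
        exact Set.Icc_subset_Icc le_rfl hr.2)
    have h1 := intervalIntegral.integral_interval_sub_left (hsub t ht) (hsub s hs)
    have h2 : 0 ≤ ∫ r in s..t, v a r * x a r :=
      intervalIntegral.integral_nonneg_of_ae_restrict hst
        (ae_restrict_of_ae_restrict_of_subset (Set.Icc_subset_Icc hs.1 ht.2) (hg0 a))
    linarith
  have hU0 : ∀ a, U a 0 = 1 / (n : ℝ) := fun a => by simp [hU]
  have hUT : ∀ a, U a T ≤ 1 + 1 / (n : ℝ) := fun a => by
    rw [hU, ← hv_unit a, add_comm]
    gcongr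
    apply intervalIntegral.integral_mono_ae_restrict hT.le (hgi a) (hvi a)
    filter_upwards [hv_nonneg a, hxa a] with s h1 h2 using mul_le_of_le_one_right h1 h2.2
  have h0mem : (0 : ℝ) ∈ Set.Icc 0 T := ⟨le_rfl, hT.le⟩
  have hTmem : T ∈ Set.Icc 0 T := ⟨hT.le, le_rfl⟩
  have hUr : ∀ a, ∀ t ∈ Set.Icc 0 T, U a t ∈ Set.Icc (1 / (n : ℝ)) (1 + 1 / (n : ℝ)) :=
    fun a t ht => ⟨(hU0 a).ge.trans (hUm a h0mem ht ht.1), (hUm a ht hTmem ht.2).trans (hUT a)⟩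
  have hUpos : ∀ a, 0 < U a T := fun a => hN0.trans_le (hUr a T hTmem).1
  have hα : 0 < log ((n : ℝ) + 1) + 1 := by
    have := log_nonneg (show (1 : ℝ) ≤ n + 1 by linarith)
    linarith
  have key : ∑ a, (Ustar a) ^ p ≤ (log ((n : ℝ) + 1) + 1) ^ p * ∑ a, (U a T) ^ p := by
    rcases le_or_gt p 1 with hp1 | hp1
    · set k : ℝ := 1 + log (1 + 1 / (n : ℝ)) with hk
      have hγpos : ∀ a, ∀ t ∈ Set.Icc 0 T, 0 < γ (U a t) := fun a t ht => by
        rw [hγ]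
        exact gamma_pos hN hk (hUr a t ht).1 (hUr a t ht).2
      have hpot : ∀ a, IntervalIntegrable
          (fun s => v a s * x a s * γ (U a s) ^ (p - 1)) volume 0 T ∧
          p * ∫ s in (0 : ℝ)..T, v a s * x a s * γ (U a s) ^ (p - 1) ≤
            (log ((n : ℝ) + 1) + 1) ^ p * U a T ^ p - (1 - p) * γ (U a T) ^ p := fun a => by
        simp only [hγ]
        exact integral_le_potential hT hN hk hp0 (hgi a) (hg0 a) (hU a) (hUm a) (hUr a)
      have hwelfare : ∑ a, γ (U a T) ^ (p - 1) * Ustar a ≤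
          ∑ a, ∫ s in (0 : ℝ)..T, v a s * x a s * γ (U a s) ^ (p - 1) := by
        simp only [hUstar, ← intervalIntegral.integral_const_mul]
        rw [← intervalIntegral.integral_finsetSum fun a _ => (hzi a).const_mul _,
          ← intervalIntegral.integral_finsetSum fun a _ => (hpot a).1]
        apply intervalIntegral.integral_mono_ae_restrict hT.le
        · simpa only [Finset.sum_fn] using IntervalIntegrable.sum Finset.univ
            fun a _ => (hzi a).const_mul (γ (U a T) ^ (p - 1))
        · simpa only [Finset.sum_fn] using IntervalIntegrable.sum Finset.univ
            fun a _ => (hpot a).1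
        filter_upwards [ae_all_iff.2 hv_nonneg, hx_feas, hgreedy, hxstar_feas,
          ae_restrict_mem measurableSet_Icc] with s h1 h2 h3 h4 hs
        refine greedy_pointwise h1 h2.1 h3.1 (fun a => hγpos a s hs) h3.2 h4.1 h4.2 fun a => ?_
        apply rpow_le_rpow_of_nonpos (hγpos a s hs) _ (by linarith)
        rw [hγ, hγ]
        exact gamma_mono hN hk (hUr a s hs).1 (hUm a hs hTmem hs.2) (hUT a)
      calc ∑ a, (Ustar a) ^ p
          ≤ ∑ a, ((1 - p) * γ (U a T) ^ p + p * (γ (U a T) ^ (p - 1) * Ustar a)) :=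
            Finset.sum_le_sum fun a _ => rpow_le_tangent hp0 hp1 (hUs0 a) (hγpos a T hTmem)
        _ = ∑ a, (1 - p) * γ (U a T) ^ p + p * ∑ a, γ (U a T) ^ (p - 1) * Ustar a := by
            rw [Finset.sum_add_distrib, Finset.mul_sum]
        _ ≤ ∑ a, (1 - p) * γ (U a T) ^ p +
              p * ∑ a, ∫ s in (0 : ℝ)..T, v a s * x a s * γ (U a s) ^ (p - 1) := by
            gcongr
        _ = ∑ a, ((1 - p) * γ (U a T) ^ p +
              p * ∫ s in (0 : ℝ)..T, v a s * x a s * γ (U a s) ^ (p - 1)) := by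
            rw [Finset.sum_add_distrib, Finset.mul_sum]
        _ ≤ ∑ a, (log ((n : ℝ) + 1) + 1) ^ p * U a T ^ p :=
            Finset.sum_le_sum fun a _ => by linarith [(hpot a).2]
        _ = _ := by rw [Finset.mul_sum]
    · have hlog : log (n : ℝ) < 1 := by
        have hl : 0 < log (n : ℝ) := log_pos (by linarith)
        rw [le_div_iff₀ hl] at hp
        nlinarith
      have h3 : (1 : ℝ) < log 3 := by
        rw [lt_log_iff_exp_lt (by norm_num)]
        exact exp_one_lt_three
      have hn2 : n = 2 := by
        by_contra hne
        have : (3 : ℝ) ≤ n := by exact_mod_cast (by omega : 3 ≤ n)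
        have := log_le_log (by norm_num) this
        linarith
      rw [Finset.mul_sum]
      refine Finset.sum_le_sum fun a _ => ?_
      rw [← mul_rpow hα.le (hUpos a).le]
      apply rpow_le_rpow (hUs0 a) _ hp0.le
      have h12 := (hUr a T hTmem).1
      subst hn2
      norm_num at h12 ⊢
      have := hUs1 a
      nlinarith
  have hS : 0 ≤ ∑ a, (U a T) ^ p := Finset.sum_nonneg fun a _ => rpow_nonneg (hUpos a).le _
  have hS' : 0 ≤ ∑ a, (Ustar a) ^ p := Finset.sum_nonneg fun a _ => rpow_nonneg (hUs0 a) _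
  rw [ge_iff_le, div_le_iff₀ hα]
  calc ((1 / (n : ℝ)) * ∑ a, (Ustar a) ^ p) ^ (1 / p)
      ≤ ((1 / (n : ℝ)) * ∑ a, (U a T) ^ p * (log ((n : ℝ) + 1) + 1) ^ p) ^ (1 / p) := by
        rw [← Finset.sum_mul, mul_comm (∑ a, (U a T) ^ p)]
        gcongr
    _ = ((1 / (n : ℝ)) * ∑ a, (U a T) ^ p) ^ (1 / p) * (log ((n : ℝ) + 1) + 1) := by
        rw [← Finset.sum_mul, ← mul_assoc, mul_rpow (by positivity) (by positivity),
          one_div p, rpow_rpow_inv hα.le hp0.ne']
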